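/- As x → 0, θ₄(x|τ) = θ₄(0|τ)·exp{−(2x²/π²)E(t)K(t)}·[1 + 2x²K(t)²/π² + (2(3−2t)/3)·x⁴K(t)⁴/π⁴ + O(x⁶)], where τ = iK(1−t)/K(t). -/

import Mathlib

/-!
The idea is to work with `τ = iy`, `y > 0`, where `θ₄(x|iy) = 1 + 2 ∑ (-1)ⁿ e^{-πn²y} cos 2nx`
and the theta constants `θ₂, θ₃, θ₄` are real functions of `y` (`nome2`, `nome3`, `nome4`).
The integral representation of `θ₄` through `ℰ(u,t)` is not needed: the Taylor coefficients of
`θ₄(x|iy)` in `x` are, by the heat equation, derivatives in `y` of the theta constant `θ₄(y)`, and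
these can be written in terms of `K` and `E`.

* Reindexing `ℤ²` by `(u + v, u - v)` (`lattice_rotation`) gives the duplication formulas for the
  theta constants, hence Jacobi's identity `θ₃⁴ = θ₂⁴ + θ₄⁴`.  Duplication sends `(θ₃², θ₄²)` at
  `y` to its arithmetic-geometric step at `2y`, and Gauss's integral `gaussI` does not change under
  such a step (`gaussI_step`).  Letting `2ⁿy → ∞` yields `gaussI θ₃² θ₄² = π/2` (`gaussI_nome`),
  that is `K(λ) = (π/2) θ₃²` for `λ = 1 - θ₄⁴/θ₃⁴` (`Kel_lam`).
* The functional equation under `y ↦ 1/y` gives `λ(1/y) = 1 - λ(y)` and `K(1-λ) = y K(λ)`, so that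
  `iK(1-λ)/K(λ) = iy` (`tauP_lam`), and `λ` takes every value in `(0,1)` (`exists_lam_eq`).  It is
  therefore enough to treat `t = λ(y)`.
* Differentiating `K(1-λ) = y K(λ)` and using the Legendre relation gives
  `λ' = -(4/π) λ(1-λ) K²` (`hasDerivAt_lam`).  Then `θ₄⁴ = (1-λ)(2K/π)²`, differentiated twice in
  `y`, produces `∑ (-1)ⁿ n² e^{-πn²y}` and `∑ (-1)ⁿ n⁴ e^{-πn²y}` as polynomials in `K`, `E`, `λ`
  times `θ₄` (`nome4_first`, `nome4_second`).
* A termwise Taylor bound for the cosine (`theta4_taylor`) shows that these sums are the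
  coefficients of `x²` and `x⁴`, up to an error `O(x⁶)`; they agree with those of
  `exp(-ax²)(1 + bx² + cx⁴)` (`isBigO_exp_quartic`).
-/

open Real Filter intervalIntegral

noncomputable section

/-- Complete elliptic integral of the first kind, parameter `t = k²`. -/
def Kel (t : ℝ) : ℝ := ∫ θ in (0:ℝ)..(π/2), 1 / Real.sqrt (1 - t * Real.sin θ ^ 2)

/-- Complete elliptic integral of the second kind, parameter `t = k²`. -/
def Eel (t : ℝ) : ℝ := ∫ θ in (0:ℝ)..(π/2), Real.sqrt (1 - t * Real.sin θ ^ 2)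

/-- The modular parameter `τ(t) = i K(1−t)/K(t)`. -/
def tauP (t : ℝ) : ℂ := Complex.I * (Kel (1 - t)) / (Kel t)

/-- Jacobi theta function θ₁. -/
def theta1 (u τ : ℂ) : ℂ :=
  2 * ∑' n : ℕ, (-1 : ℂ) ^ n * Complex.exp (π * Complex.I * τ * ((n : ℂ) + 1/2) ^ 2) *
      Complex.sin ((2 * (n : ℂ) + 1) * u)

/-- Jacobi theta function θ₂. -/
def theta2 (u τ : ℂ) : ℂ :=
  2 * ∑' n : ℕ, Complex.exp (π * Complex.I * τ * ((n : ℂ) + 1/2) ^ 2) *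
      Complex.cos ((2 * (n : ℂ) + 1) * u)

/-- Jacobi theta function θ₃. -/
def theta3 (u τ : ℂ) : ℂ :=
  1 + 2 * ∑' n : ℕ, Complex.exp (π * Complex.I * τ * ((n : ℂ) + 1) ^ 2) *
      Complex.cos (2 * ((n : ℂ) + 1) * u)

/-- Jacobi theta function θ₄. -/
def theta4 (u τ : ℂ) : ℂ :=
  1 + 2 * ∑' n : ℕ, (-1 : ℂ) ^ (n + 1) * Complex.exp (π * Complex.I * τ * ((n : ℂ) + 1) ^ 2) *
      Complex.cos (2 * ((n : ℂ) + 1) * u)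

/-- Jacobi elliptic sn, parameter `t = k²`, via theta quotients. -/
def snJ (u : ℂ) (t : ℝ) : ℂ :=
  (t : ℂ) ^ (-(1/4 : ℂ)) *
    theta1 (π * u / (2 * Kel t)) (tauP t) / theta4 (π * u / (2 * Kel t)) (tauP t)

/-- Jacobi elliptic cn. -/
def cnJ (u : ℂ) (t : ℝ) : ℂ :=
  ((1 - t : ℂ) / (t : ℂ)) ^ (1/4 : ℂ) *
    theta2 (π * u / (2 * Kel t)) (tauP t) / theta4 (π * u / (2 * Kel t)) (tauP t)

/-- Jacobi elliptic dn. -/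
def dnJ (u : ℂ) (t : ℝ) : ℂ :=
  (1 - t : ℂ) ^ (1/4 : ℂ) *
    theta3 (π * u / (2 * Kel t)) (tauP t) / theta4 (π * u / (2 * Kel t)) (tauP t)

/-- Incomplete elliptic integral of the second kind ℰ(u,t) = ∫₀ᵘ dn²(x,t) dx. -/
def Einc (u : ℝ) (t : ℝ) : ℂ := ∫ x in (0:ℝ)..u, (dnJ (x : ℂ) t) ^ 2

/-! ### Theta constants on the imaginary axis -/

/-- The theta constant `θ₃(0|iy) = ∑ e^{-πn²y}` over `n ∈ ℤ`, as Mathlib's cosine kernel at `0`;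
only the values at `y > 0` are meaningful. -/
def nome3 (y : ℝ) : ℝ := HurwitzZeta.cosKernel ((0:ℝ) : UnitAddCircle) y
/-- The theta constant `θ₄(0|iy) = ∑ (-1)ⁿ e^{-πn²y}` over `n ∈ ℤ`, as the cosine kernel at `1/2`. -/
def nome4 (y : ℝ) : ℝ := HurwitzZeta.cosKernel ((1/2:ℝ) : UnitAddCircle) y
/-- The theta constant `θ₂(0|iy) = ∑ e^{-π(n+1/2)²y}` over `n ∈ ℤ`, as the even kernel at `1/2`. -/
def nome2 (y : ℝ) : ℝ := HurwitzZeta.evenKernel ((1/2:ℝ) : UnitAddCircle) y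

theorem hasSum_nome3 {y : ℝ} (hy : 0 < y) :
    HasSum (fun n : ℤ => rexp (-π * (n:ℝ) ^ 2 * y)) (nome3 y) := by
  have := HurwitzZeta.hasSum_int_evenKernel 0 hy
  have h0 := HurwitzZeta.evenKernel_eq_cosKernel_of_zero
  simpa [nome3, h0] using this

theorem hasSum_nome2 {y : ℝ} (hy : 0 < y) :
    HasSum (fun n : ℤ => rexp (-π * ((n:ℝ) + 1/2) ^ 2 * y)) (nome2 y) :=
  HurwitzZeta.hasSum_int_evenKernel (1/2) hy

theorem hasSum_nome4 {y : ℝ} (hy : 0 < y) :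
    HasSum (fun n : ℤ => (-1 : ℝ) ^ n * rexp (-π * (n:ℝ) ^ 2 * y)) (nome4 y) := by
  have := HurwitzZeta.hasSum_int_cosKernel (1/2) hy
  rw [← Complex.hasSum_ofReal]
  refine this.congr_fun fun n => ?_
  have h : Complex.exp (2 * π * Complex.I * ((1/2 : ℝ) : ℂ) * n) = (-1) ^ n := by
    rw [← Complex.exp_pi_mul_I, ← Complex.exp_int_mul]
    congr 1
    push_cast
    ring
  rw [h]
  push_cast
  ring

/-- The pairs `(m, n)` with `m + n` even are the `(u + v, u - v)`, and those with `m + n` odd are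
the `(u + v + 1, u - v)`. -/
theorem tsum_int_prod_split {F : ℤ × ℤ → ℝ} (hF : Summable F) :
    ∑' p, F p = ∑' p : ℤ × ℤ, F (p.1 + p.2, p.1 - p.2) +
      ∑' p : ℤ × ℤ, F (p.1 + p.2 + 1, p.1 - p.2) := by
  set e0 : ℤ × ℤ → ℤ × ℤ := fun p => (p.1 + p.2, p.1 - p.2) with he0
  set e1 : ℤ × ℤ → ℤ × ℤ := fun p => (p.1 + p.2 + 1, p.1 - p.2) with he1
  have i0 : Function.Injective e0 := by
    rintro ⟨a, b⟩ ⟨c, d⟩ h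
    simp only [he0, Prod.mk.injEq] at h ⊢
    omega
  have i1 : Function.Injective e1 := by
    rintro ⟨a, b⟩ ⟨c, d⟩ h
    simp only [he1, Prod.mk.injEq] at h ⊢
    omega
  have hc : IsCompl (Set.range e0) (Set.range e1) := by
    constructor
    · rw [Set.disjoint_left]
      rintro _ ⟨⟨a, b⟩, rfl⟩ ⟨⟨c, d⟩, h⟩
      simp only [he0, he1, Prod.mk.injEq] at h
      omega
    · rw [codisjoint_iff_le_sup]
      rintro ⟨m, n⟩ -
      rcases Int.even_or_odd (m + n) with ⟨k, hk⟩ | ⟨k, hk⟩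
      · left
        exact ⟨(k, m - k), by simp only [he0, Prod.mk.injEq]; omega⟩
      · right
        exact ⟨(k, m - k - 1), by simp only [he1, Prod.mk.injEq]; omega⟩
  have h0 : HasSum (fun x : Set.range e0 => F x) (∑' p, F (e0 p)) :=
    (i0.hasSum_range_iff).2 (hF.comp_injective i0).hasSum
  have h1 : HasSum (fun x : Set.range e1 => F x) (∑' p, F (e1 p)) :=
    (i1.hasSum_range_iff).2 (hF.comp_injective i1).hasSum
  exact (h0.add_isCompl hc h1).tsum_eq

/-- Product of two sums over `ℤ`, rotated by 45 degrees: if the summands factor in the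
coordinates `(u, v)` on each of the two cosets, then so do the sums. All duplication formulas below
are instances, the exponents being combined by
`(u + v)² + (u - v)² = 2u² + 2v²`. -/
theorem lattice_rotation {f g f0 g0 f1 g1 : ℤ → ℝ} {a b a0 b0 a1 b1 : ℝ}
    (hf : HasSum f a) (hg : HasSum g b) (hf0 : HasSum f0 a0) (hg0 : HasSum g0 b0)
    (hf1 : HasSum f1 a1) (hg1 : HasSum g1 b1)
    (h0 : ∀ u v, f (u + v) * g (u - v) = f0 u * g0 v)
    (h1 : ∀ u v, f (u + v + 1) * g (u - v) = f1 u * g1 v) :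
    a * b = a0 * b0 + a1 * b1 := by
  have key : ∀ {p q : ℤ → ℝ} {c d : ℝ}, HasSum p c → HasSum q d →
      HasSum (fun x : ℤ × ℤ => p x.1 * q x.2) (c * d) := fun hp hq =>
    hp.mul hq (summable_mul_of_summable_norm hp.summable.norm hq.summable.norm)
  have k := key hf hg
  have := tsum_int_prod_split k.summable
  simp only [h0, h1] at this
  rwa [k.tsum_eq, (key hf0 hg0).tsum_eq, (key hf1 hg1).tsum_eq] at this

theorem neg_one_zpow_add_self (u v : ℤ) : (-1:ℝ) ^ (u + v) * (-1) ^ (u - v) = 1 := by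
  rw [← zpow_add₀ (by norm_num)]
  exact Even.neg_one_zpow ⟨u, by ring⟩

theorem neg_one_zpow_sub' (u v : ℤ) : (-1:ℝ) ^ (u - v) = (-1) ^ u * (-1) ^ v := by
  rw [zpow_sub₀ (by norm_num), div_eq_mul_inv, ← inv_zpow]
  norm_num

theorem nome3_sq {y : ℝ} (hy : 0 < y) : nome3 y ^ 2 = nome3 (2*y) ^ 2 + nome2 (2*y) ^ 2 := by
  have h2 : 0 < 2 * y := by positivity
  have := lattice_rotation (hasSum_nome3 hy) (hasSum_nome3 hy) (hasSum_nome3 h2) (hasSum_nome3 h2)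
    (hasSum_nome2 h2) (hasSum_nome2 h2)
    (fun u v => by rw [← Real.exp_add, ← Real.exp_add]; congr 1; push_cast; ring)
    (fun u v => by rw [← Real.exp_add, ← Real.exp_add]; congr 1; push_cast; ring)
  linarith

theorem nome4_sq {y : ℝ} (hy : 0 < y) : nome4 y ^ 2 = nome3 (2*y) ^ 2 - nome2 (2*y) ^ 2 := by
  have h2 : 0 < 2 * y := by positivity
  have := lattice_rotation (hasSum_nome4 hy) (hasSum_nome4 hy) (hasSum_nome3 h2) (hasSum_nome3 h2)
    (hasSum_nome2 h2).neg (hasSum_nome2 h2)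
    (fun u v => by
      rw [mul_mul_mul_comm, neg_one_zpow_add_self, one_mul, ← Real.exp_add, ← Real.exp_add]
      congr 1; push_cast; ring)
    (fun u v => by
      rw [mul_mul_mul_comm, zpow_add₀ (by norm_num) (u + v), mul_right_comm _ ((-1 : ℝ) ^ (1 : ℤ)),
        neg_one_zpow_add_self, neg_mul (rexp _), ← Real.exp_add, ← Real.exp_add, zpow_one, one_mul,
        neg_one_mul]
      congr 2; push_cast; ring)
  linarith

/-- The terms cancel in pairs under `n ↦ -1 - n`. -/
theorem hasSum_alternating_half {y : ℝ} (hy : 0 < y) :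
    HasSum (fun n : ℤ => (-1 : ℝ) ^ n * rexp (-π * ((n:ℝ) + 1/2) ^ 2 * y)) 0 := by
  have hs : Summable (fun n : ℤ => (-1 : ℝ) ^ n * rexp (-π * ((n:ℝ) + 1/2) ^ 2 * y)) := by
    refine Summable.of_norm ?_
    simpa [abs_zpow] using (hasSum_nome2 hy).summable
  -- reflecting `n ↦ -1 - n` changes the sign of every term, so the sum is its own negative
  have h := hs.hasSum
  have h' := (Equiv.subLeft (-1 : ℤ)).hasSum_iff.2 h
  have e : ((fun n : ℤ => (-1 : ℝ) ^ n * rexp (-π * ((n:ℝ) + 1/2) ^ 2 * y)) ∘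
      (Equiv.subLeft (-1 : ℤ))) =
      fun n : ℤ => -((-1 : ℝ) ^ n * rexp (-π * ((n:ℝ) + 1/2) ^ 2 * y)) := by
    funext n
    simp only [Function.comp, Equiv.subLeft_apply, neg_one_zpow_sub', zpow_neg, zpow_one]
    rw [← neg_mul]
    congr 1
    · norm_num
    · congr 1; push_cast; ring
  rw [e] at h'
  have h1 := h'.tsum_eq
  rw [tsum_neg] at h1
  have h2 : ∑' n : ℤ, (-1 : ℝ) ^ n * rexp (-π * ((n:ℝ) + 1/2) ^ 2 * y) = 0 := by linarith
  rwa [h2] at h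

theorem nome3_mul_nome4 {y : ℝ} (hy : 0 < y) : nome3 y * nome4 y = nome4 (2*y) ^ 2 := by
  have h2 : 0 < 2 * y := by positivity
  have := lattice_rotation (hasSum_nome3 hy) (hasSum_nome4 hy) (hasSum_nome4 h2) (hasSum_nome4 h2)
    (hasSum_alternating_half h2) (hasSum_alternating_half h2)
    (fun u v => by
      rw [neg_one_zpow_sub', mul_left_comm, ← Real.exp_add, mul_mul_mul_comm, ← Real.exp_add]
      congr 2; push_cast; ring)
    (fun u v => by
      rw [neg_one_zpow_sub', mul_left_comm, ← Real.exp_add, mul_mul_mul_comm, ← Real.exp_add]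
      congr 2; push_cast; ring)
  linarith

theorem nome2_sq {y : ℝ} (hy : 0 < y) : nome2 y ^ 2 = 2 * nome2 (2*y) * nome3 (2*y) := by
  have h2 : 0 < 2 * y := by positivity
  have := lattice_rotation (hasSum_nome2 hy) (hasSum_nome2 hy) (hasSum_nome2 h2) (hasSum_nome3 h2)
    ((Equiv.addRight (1 : ℤ)).hasSum_iff.2 (hasSum_nome3 h2)) (hasSum_nome2 h2)
    (fun u v => by rw [← Real.exp_add, ← Real.exp_add]; congr 1; push_cast; ring)
    (fun u v => by
      simp only [Function.comp, Equiv.coe_addRight]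
      rw [← Real.exp_add, ← Real.exp_add]; congr 1; push_cast; ring)
  linarith

/-- Jacobi's quartic identity `θ₃⁴ = θ₂⁴ + θ₄⁴`. -/
theorem jacobi_quartic {y : ℝ} (hy : 0 < y) : nome3 y ^ 4 = nome2 y ^ 4 + nome4 y ^ 4 := by
  have a := nome3_sq hy
  have b := nome4_sq hy
  have c := nome2_sq hy
  have : nome3 y ^ 4 = (nome3 y ^ 2) ^ 2 := by ring
  rw [this, show nome2 y ^ 4 = (nome2 y ^ 2) ^ 2 by ring,
    show nome4 y ^ 4 = (nome4 y ^ 2) ^ 2 by ring, a, b, c]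
  ring

theorem nome3_inv {y : ℝ} (hy : 0 < y) : nome3 (1/y) ^ 2 = y * nome3 y ^ 2 := by
  have h := HurwitzZeta.evenKernel_functional_equation 0 y
  rw [HurwitzZeta.evenKernel_eq_cosKernel_of_zero] at h
  -- Mathlib states the functional equation between the even and the cosine kernel, which agree at `0`
  have h' : nome3 y = 1 / y ^ (1/2:ℝ) * nome3 (1/y) := by simpa [nome3] using h
  rw [h', ← Real.sqrt_eq_rpow, mul_pow, div_pow, Real.sq_sqrt hy.le]
  field_simp

theorem nome4_inv {y : ℝ} (hy : 0 < y) : nome4 (1/y) = √y * nome2 y := by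
  have h := HurwitzZeta.evenKernel_functional_equation ((1/2:ℝ) : UnitAddCircle) y
  have h' : nome2 y = 1 / y ^ (1/2:ℝ) * nome4 (1/y) := h
  have := Real.sqrt_pos.2 hy
  rw [h', ← Real.sqrt_eq_rpow]
  field_simp

theorem nome3_pos {y : ℝ} (hy : 0 < y) : 0 < nome3 y :=
  (hasSum_nome3 hy).tsum_eq ▸ (hasSum_nome3 hy).summable.tsum_pos (fun _ => (exp_pos _).le) 0 (exp_pos _)

theorem nome2_pos {y : ℝ} (hy : 0 < y) : 0 < nome2 y :=
  (hasSum_nome2 hy).tsum_eq ▸ (hasSum_nome2 hy).summable.tsum_pos (fun _ => (exp_pos _).le) 0 (exp_pos _)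

theorem nome4_pos {y : ℝ} (hy : 0 < y) : 0 < nome4 y := by
  have h : 0 < 1 / y := by positivity
  have := nome4_inv h
  rw [one_div_one_div] at this
  rw [this]
  exact mul_pos (Real.sqrt_pos.2 h) (nome2_pos h)

theorem tendsto_cosKernel_one (a : UnitAddCircle) :
    Tendsto (HurwitzZeta.cosKernel a) atTop (nhds 1) := by
  obtain ⟨p, hp, h⟩ := HurwitzZeta.isBigO_atTop_cosKernel_sub a
  have : Tendsto (fun x : ℝ => rexp (-p * x)) atTop (nhds 0) := by
    refine (Real.tendsto_exp_neg_atTop_nhds_zero.comp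
      (tendsto_id.const_mul_atTop hp)).congr fun x => ?_
    simp
  simpa using (h.trans_tendsto this).add_const 1

theorem hasSum_nome3_nat {y : ℝ} (hy : 0 < y) :
    HasSum (fun n : ℕ => 2 * rexp (-π * ((n:ℝ) + 1) ^ 2 * y)) (nome3 y - 1) := by
  simpa [nome3] using HurwitzZeta.hasSum_nat_cosKernel₀ 0 hy

theorem hasSum_nome4_nat {y : ℝ} (hy : 0 < y) :
    HasSum (fun n : ℕ => 2 * (-1 : ℝ) ^ (n + 1) * rexp (-π * ((n:ℝ) + 1) ^ 2 * y))
      (nome4 y - 1) := by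
  refine (HurwitzZeta.hasSum_nat_cosKernel₀ (1/2) hy).congr_fun fun n => ?_
  have := Real.cos_nat_mul_pi (n + 1)
  push_cast at this
  rw [show 2 * π * (1/2) * ((n:ℝ) + 1) = (n + 1) * π by ring, this]
/-! ### Gauss's integral and the complete elliptic integrals -/

/-- Gauss's integral `∫₀^{π/2} dθ / √(a² cos² θ + b² sin² θ)`, equal to `π / (2 AGM(a, b))`. -/
def gaussI (a b : ℝ) : ℝ := ∫ θ in (0:ℝ)..(π/2), 1 / √(a ^ 2 * cos θ ^ 2 + b ^ 2 * sin θ ^ 2)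

theorem gauss_radicand_pos {a b : ℝ} (ha : 0 < a) (hb : 0 < b) (θ : ℝ) :
    0 < a ^ 2 * cos θ ^ 2 + b ^ 2 * sin θ ^ 2 := by
  rcases eq_or_ne (sin θ) 0 with h | h
  · have := sin_sq_add_cos_sq θ
    rw [h] at this ⊢
    have : cos θ ^ 2 = 1 := by linarith
    rw [this]; positivity
  · positivity

theorem weighted_sum_pos {a b : ℝ} (ha : 0 < a) (hb : 0 < b) (θ : ℝ) :
    0 < a * cos θ ^ 2 + b * sin θ ^ 2 := by
  have := gauss_radicand_pos (Real.sqrt_pos.2 ha) (Real.sqrt_pos.2 hb) θ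
  rwa [Real.sq_sqrt ha.le, Real.sq_sqrt hb.le] at this

theorem gauss_integrand_continuous {a b : ℝ} (ha : 0 < a) (hb : 0 < b) :
    Continuous fun θ => 1 / √(a ^ 2 * cos θ ^ 2 + b ^ 2 * sin θ ^ 2) := by
  refine Continuous.div continuous_const (by fun_prop) fun θ => ?_
  exact (Real.sqrt_pos.2 (gauss_radicand_pos ha hb θ)).ne'

/-- The integrand is symmetric about `π/2`. -/
theorem gaussI_full {a b : ℝ} (ha : 0 < a) (hb : 0 < b) :
    ∫ θ in (0:ℝ)..π, 1 / √(a ^ 2 * cos θ ^ 2 + b ^ 2 * sin θ ^ 2) = 2 * gaussI a b := by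
  have hc := gauss_integrand_continuous ha hb
  rw [← intervalIntegral.integral_add_adjacent_intervals (hc.intervalIntegrable 0 (π/2))
    (hc.intervalIntegrable (π/2) π)]
  have := intervalIntegral.integral_comp_sub_left
    (fun θ => 1 / √(a ^ 2 * cos θ ^ 2 + b ^ 2 * sin θ ^ 2)) π (a := 0) (b := π/2)
  simp only [cos_pi_sub, sin_pi_sub, neg_sq, sub_zero, sub_half] at this
  rw [← this, gaussI]
  ring

/-- Invariance of Gauss's integral under one arithmetic-geometric step. The substitution is
`θ = 2φ - arctan ((a - b) sin φ cos φ / (a cos² φ + b sin² φ))`, which maps `[0, π/2]` onto `[0, π]`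
and is equivalent to Landen's `tan (θ - φ) = (b/a) tan φ`, but has no singularity at `φ = π/2`. -/
theorem gaussI_step {a b : ℝ} (ha : 0 < a) (hb : 0 < b) :
    gaussI a b = gaussI ((a + b) / 2) (√(a * b)) := by
  set r : ℝ → ℝ := fun φ => (a - b) * sin φ * cos φ / (a * cos φ ^ 2 + b * sin φ ^ 2) with hr
  set f : ℝ → ℝ := fun φ => 2 * φ - arctan (r φ) with hf
  set f' : ℝ → ℝ := fun φ => (a + b) * (a * cos φ ^ 2 + b * sin φ ^ 2) /
    (a ^ 2 * cos φ ^ 2 + b ^ 2 * sin φ ^ 2) with hf'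
  have hr2 : ∀ φ, 1 + r φ ^ 2 = (a ^ 2 * cos φ ^ 2 + b ^ 2 * sin φ ^ 2) /
      (a * cos φ ^ 2 + b * sin φ ^ 2) ^ 2 := fun φ => by
    have hD := weighted_sum_pos ha hb φ
    have h1 := sin_sq_add_cos_sq φ
    simp only [hr]
    rw [div_pow, eq_div_iff (by positivity), add_mul, div_mul_cancel₀ _ (by positivity)]
    linear_combination (a ^ 2 * cos φ ^ 2 + b ^ 2 * sin φ ^ 2) * h1
  have hder : ∀ φ, HasDerivAt f (f' φ) φ := fun φ => by
    have hD := weighted_sum_pos ha hb φ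
    have hΔ := gauss_radicand_pos ha hb φ
    have h1 := sin_sq_add_cos_sq φ
    have hn : HasDerivAt (fun φ => (a - b) * sin φ * cos φ)
        ((a - b) * (cos φ ^ 2 - sin φ ^ 2)) φ := by
      convert! ((hasDerivAt_sin φ).const_mul (a - b)).mul (hasDerivAt_cos φ) using 1
      ring
    have hd : HasDerivAt (fun φ => a * cos φ ^ 2 + b * sin φ ^ 2)
        (2 * (b - a) * sin φ * cos φ) φ := by
      convert! (((hasDerivAt_cos φ).pow 2).const_mul a).add
        (((hasDerivAt_sin φ).pow 2).const_mul b) using 1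
      push_cast
      ring
    have := ((hasDerivAt_id φ).const_mul 2).sub (hn.div hd hD.ne').arctan
    convert! this using 1
    have e := hr2 φ
    simp only [hr] at e
    simp only [hf', Pi.div_apply]
    rw [e]
    field_simp
    have hs : sin φ ^ 2 = 1 - cos φ ^ 2 := by linarith
    have hs3 : sin φ ^ 4 = (1 - cos φ ^ 2) ^ 2 := by rw [← hs]; ring
    ring_nf
    simp only [hs, hs3]
    ring
  have hsin : ∀ φ, sin (f φ) ^ 2 = (a + b) ^ 2 * sin φ ^ 2 * cos φ ^ 2 /
      (a ^ 2 * cos φ ^ 2 + b ^ 2 * sin φ ^ 2) := fun φ => by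
    have hD := weighted_sum_pos ha hb φ
    have hΔ := gauss_radicand_pos ha hb φ
    have h1 := sin_sq_add_cos_sq φ
    have e := hr2 φ
    have hp : 0 < 1 + r φ ^ 2 := by positivity
    have : sin (f φ) = (2 * sin φ * cos φ - (cos φ ^ 2 - sin φ ^ 2) * r φ) / √(1 + r φ ^ 2) := by
      simp only [hf]
      rw [sin_sub, sin_arctan, cos_arctan, sin_two_mul, cos_two_mul']
      ring
    rw [this, div_pow, Real.sq_sqrt hp.le, e, div_div_eq_mul_div]
    congr 1
    rw [← mul_pow]
    have : (2 * sin φ * cos φ - (cos φ ^ 2 - sin φ ^ 2) * r φ) *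
        (a * cos φ ^ 2 + b * sin φ ^ 2) = (a + b) * sin φ * cos φ := by
      simp only [hr]
      rw [sub_mul, mul_assoc _ (_ / _), div_mul_cancel₀ _ hD.ne']
      linear_combination (a + b) * sin φ * cos φ * h1
    rw [this]
    ring
  have hab : 0 < (a + b) / 2 := by positivity
  have hg := gauss_integrand_continuous hab (Real.sqrt_pos.2 (mul_pos ha hb))
  have hcont : ContinuousOn f' (Set.uIcc 0 (π/2)) := by
    refine Continuous.continuousOn (Continuous.div (by fun_prop) (by fun_prop) fun φ => ?_)
    exact (gauss_radicand_pos ha hb φ).ne'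
  have key := intervalIntegral.integral_comp_mul_deriv (a := 0) (b := π/2)
    (fun x _ => hder x) hcont hg
  have f0 : f 0 = 0 := by simp [hf, hr]
  have f1 : f (π/2) = π := by
    simp only [hf, hr, cos_pi_div_two]
    simp
    ring
  rw [f0, f1, gaussI_full hab (Real.sqrt_pos.2 (mul_pos ha hb))] at key
  have : ∀ φ, ((fun θ => 1 / √(((a + b) / 2) ^ 2 * cos θ ^ 2 + √(a * b) ^ 2 * sin θ ^ 2)) ∘ f) φ
      * f' φ = 2 * (1 / √(a ^ 2 * cos φ ^ 2 + b ^ 2 * sin φ ^ 2)) := fun φ => by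
    have hD := weighted_sum_pos ha hb φ
    have hΔ := gauss_radicand_pos ha hb φ
    have hsΔ := Real.sqrt_pos.2 hΔ
    have h1 := sin_sq_add_cos_sq φ
    have : ((a + b) / 2) ^ 2 * cos (f φ) ^ 2 + √(a * b) ^ 2 * sin (f φ) ^ 2 =
        ((a + b) / 2 * (a * cos φ ^ 2 + b * sin φ ^ 2) /
          √(a ^ 2 * cos φ ^ 2 + b ^ 2 * sin φ ^ 2)) ^ 2 := by
      have h2 : (a * cos φ ^ 2 + b * sin φ ^ 2) ^ 2 = a ^ 2 * cos φ ^ 2 + b ^ 2 * sin φ ^ 2 -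
          (a - b) ^ 2 * sin φ ^ 2 * cos φ ^ 2 := by
        linear_combination (a ^ 2 * cos φ ^ 2 + b ^ 2 * sin φ ^ 2) * h1
      rw [cos_sq', hsin, Real.sq_sqrt (mul_pos ha hb).le, div_pow _ (√_), Real.sq_sqrt hΔ.le,
        mul_pow, h2]
      field_simp
      ring
    simp only [Function.comp, this, hf']
    rw [Real.sqrt_sq (by positivity)]
    rw [show (a + b) * (a * cos φ ^ 2 + b * sin φ ^ 2) /
      (a ^ 2 * cos φ ^ 2 + b ^ 2 * sin φ ^ 2) = (a + b) * (a * cos φ ^ 2 + b * sin φ ^ 2) /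
      (√(a ^ 2 * cos φ ^ 2 + b ^ 2 * sin φ ^ 2)) ^ 2 by rw [Real.sq_sqrt hΔ.le]]
    field_simp
  simp only [this] at key
  rw [intervalIntegral.integral_const_mul] at key
  rw [gaussI]
  linarith

theorem gaussI_bounds {a b : ℝ} (hb : 0 < b) (hab : b ≤ a) :
    π / 2 / a ≤ gaussI a b ∧ gaussI a b ≤ π / 2 / b := by
  have ha : 0 < a := hb.trans_le hab
  have hc := (gauss_integrand_continuous ha hb).intervalIntegrable (μ := MeasureTheory.volume) 0 (π/2)
  have hpi : (0:ℝ) ≤ π / 2 := by positivity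
  have hsq : b ^ 2 ≤ a ^ 2 := by gcongr
  have key : ∀ θ, b ≤ √(a ^ 2 * cos θ ^ 2 + b ^ 2 * sin θ ^ 2) ∧
      √(a ^ 2 * cos θ ^ 2 + b ^ 2 * sin θ ^ 2) ≤ a := fun θ => by
    have h1 := sin_sq_add_cos_sq θ
    constructor
    · apply Real.le_sqrt_of_sq_le
      nlinarith [sq_nonneg (cos θ)]
    · rw [Real.sqrt_le_left ha.le]
      nlinarith [sq_nonneg (sin θ)]
  constructor
  · have := intervalIntegral.integral_mono_on hpi
      (intervalIntegrable_const (c := 1 / a)) hc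
      (fun θ _ => one_div_le_one_div_of_le (hb.trans_le (key θ).1) (key θ).2)
    rw [intervalIntegral.integral_const, smul_eq_mul, sub_zero, mul_one_div] at this
    exact this
  · have := intervalIntegral.integral_mono_on hpi hc
      (intervalIntegrable_const (c := 1 / b))
      (fun θ _ => one_div_le_one_div_of_le hb (key θ).1)
    rw [intervalIntegral.integral_const, smul_eq_mul, sub_zero, mul_one_div] at this
    exact this

theorem Kel_eq_gaussI {a b : ℝ} (ha : 0 < a) :
    Kel (1 - b ^ 2 / a ^ 2) = a * gaussI a b := by
  rw [Kel, gaussI, ← intervalIntegral.integral_const_mul]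
  congr 1
  funext θ
  have : a ^ 2 * cos θ ^ 2 + b ^ 2 * sin θ ^ 2 =
      a ^ 2 * (1 - (1 - b ^ 2 / a ^ 2) * sin θ ^ 2) := by
    rw [cos_sq']
    field_simp
    ring
  rw [this, Real.sqrt_mul (by positivity), Real.sqrt_sq ha.le]
  field_simp

theorem Kel_eq_gaussI_one {t : ℝ} (ht : t < 1) : Kel t = gaussI 1 (√(1 - t)) := by
  have := Kel_eq_gaussI (a := 1) (b := √(1 - t)) one_pos
  rw [Real.sq_sqrt (by linarith)] at this
  simpa using this

theorem Kel_bounds {t : ℝ} (h0 : 0 ≤ t) (ht : t < 1) :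
    π / 2 ≤ Kel t ∧ Kel t ≤ π / 2 / √(1 - t) := by
  have h1 : 0 < 1 - t := by linarith
  have := gaussI_bounds (a := 1) (Real.sqrt_pos.2 h1) (Real.sqrt_le_one.2 (by linarith))
  rwa [← Kel_eq_gaussI_one ht, div_one] at this

/-! ### Derivatives of `K` and `E`, and the Legendre relation -/

theorem radicand_pos {t : ℝ} (h0 : 0 < t) (ht : t < 1) (θ : ℝ) : 0 < 1 - t * sin θ ^ 2 := by
  nlinarith [sin_sq_le_one θ]

theorem legendre_integrand_continuous {t : ℝ} (h0 : 0 < t) (ht : t < 1) :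
    Continuous fun θ => 1 / √(1 - t * sin θ ^ 2) := by
  refine Continuous.div continuous_const (by fun_prop) fun θ => ?_
  exact (Real.sqrt_pos.2 (radicand_pos h0 ht θ)).ne'

theorem cube_integrand_continuous {t : ℝ} (h0 : 0 < t) (ht : t < 1) :
    Continuous fun θ => 1 / ((1 - t * sin θ ^ 2) * √(1 - t * sin θ ^ 2)) := by
  refine Continuous.div continuous_const (by fun_prop) fun θ => ?_
  have := radicand_pos h0 ht θ
  positivity

/-- The difference of the two integrands is the derivative of
`t sin θ cos θ / √(1 - t sin² θ)`, which vanishes at both endpoints. -/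
theorem integral_cube {t : ℝ} (h0 : 0 < t) (ht : t < 1) :
    (1 - t) * ∫ θ in (0:ℝ)..(π/2), 1 / ((1 - t * sin θ ^ 2) * √(1 - t * sin θ ^ 2)) = Eel t := by
  have hder : ∀ θ, HasDerivAt (fun θ => t * sin θ * cos θ / √(1 - t * sin θ ^ 2))
      (√(1 - t * sin θ ^ 2) -
        (1 - t) * (1 / ((1 - t * sin θ ^ 2) * √(1 - t * sin θ ^ 2)))) θ := fun θ => by
    have hΔ := radicand_pos h0 ht θ
    have hs := Real.sqrt_pos.2 hΔ
    have hn : HasDerivAt (fun θ => t * sin θ * cos θ) (t * (cos θ ^ 2 - sin θ ^ 2)) θ := by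
      convert! ((hasDerivAt_sin θ).const_mul t).mul (hasDerivAt_cos θ) using 1
      ring
    have hd : HasDerivAt (fun θ => 1 - t * sin θ ^ 2) (-(2 * t * sin θ * cos θ)) θ := by
      convert! (((hasDerivAt_sin θ).pow 2).const_mul t).const_sub 1 using 1
      push_cast
      ring
    convert! hn.div (hd.sqrt hΔ.ne') hs.ne' using 1
    have e := Real.sq_sqrt hΔ.le
    have hcos := cos_sq' θ
    set R := √(1 - t * sin θ ^ 2)
    rw [← e]
    field_simp
    have e4 : R ^ 4 = (1 - t * sin θ ^ 2) ^ 2 := by rw [← e]; ring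
    ring_nf
    simp only [e, e4, hcos]
    ring
  have hi := (cube_integrand_continuous h0 ht).intervalIntegrable (μ := MeasureTheory.volume) 0 (π/2)
  have hE : IntervalIntegrable (fun θ => √(1 - t * sin θ ^ 2)) MeasureTheory.volume 0 (π/2) :=
    Continuous.intervalIntegrable (by fun_prop) _ _
  have := intervalIntegral.integral_eq_sub_of_hasDerivAt (a := 0) (b := π/2)
    (fun θ _ => hder θ) (hE.sub (hi.const_mul _))
  rw [intervalIntegral.integral_sub hE (hi.const_mul _), intervalIntegral.integral_const_mul] at this
  simp only [sin_zero, cos_pi_div_two, mul_zero, zero_mul, zero_div, sub_zero] at this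
  rw [Eel]
  linarith

theorem hasDerivAt_Kel {t : ℝ} (h0 : 0 < t) (ht : t < 1) :
    HasDerivAt Kel ((Eel t - (1 - t) * Kel t) / (2 * t * (1 - t))) t := by
  have hr : t < (1 + t) / 2 := by linarith
  have hδ : 0 < 1 - (1 + t) / 2 := by linarith
  have h1t : 0 < 1 - t := by linarith
  have hc := cube_integrand_continuous h0 ht
  have hk := legendre_integrand_continuous h0 ht
  have := (intervalIntegral.hasDerivAt_integral_of_dominated_loc_of_deriv_le
    (μ := MeasureTheory.volume) (a := 0) (b := π/2)
    (F := fun t θ => 1 / √(1 - t * sin θ ^ 2))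
    (F' := fun t θ => sin θ ^ 2 / 2 * (1 / ((1 - t * sin θ ^ 2) * √(1 - t * sin θ ^ 2))))
    (bound := fun _ => 1 / 2 * (1 / ((1 - (1 + t) / 2) * √(1 - (1 + t) / 2))))
    -- the bound is uniform for parameters below the midpoint of `t` and `1`
    (Ioo_mem_nhds h0 hr)
    (by
      filter_upwards [Ioo_mem_nhds h0 ht] with x hx
      exact (legendre_integrand_continuous hx.1 hx.2).aestronglyMeasurable)
    (hk.intervalIntegrable _ _)
    (by
      refine Continuous.aestronglyMeasurable ?_
      exact (by fun_prop : Continuous fun θ : ℝ => sin θ ^ 2 / 2).mul hc)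
    (by
      refine Eventually.of_forall fun θ _ x hx => ?_
      have hx1 : x < 1 := by linarith [hx.2]
      have hp := radicand_pos hx.1 hx1 θ
      have hs1 := sin_sq_le_one θ
      have hle : 1 - (1 + t) / 2 ≤ 1 - x * sin θ ^ 2 := by nlinarith [hx.1, hx.2]
      rw [Real.norm_of_nonneg (by positivity)]
      gcongr)
    intervalIntegrable_const
    (by
      refine Eventually.of_forall fun θ _ x hx => ?_
      have hx1 : x < 1 := by linarith [hx.2]
      have hp := radicand_pos hx.1 hx1 θ
      have hs := Real.sqrt_pos.2 hp
      have hd : HasDerivAt (fun x => 1 - x * sin θ ^ 2) (-(sin θ ^ 2)) x := by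
        convert! ((hasDerivAt_id x).mul_const (sin θ ^ 2)).const_sub 1 using 1
        ring
      convert! (hasDerivAt_const x (1:ℝ)).div (hd.sqrt hp.ne') hs.ne' using 1
      have e := Real.sq_sqrt hp.le
      set R := √(1 - x * sin θ ^ 2)
      rw [← e]
      field_simp
      ring)).2
  convert! this using 1
  have hcI := hc.intervalIntegrable (μ := MeasureTheory.volume) 0 (π/2)
  have hkI := hk.intervalIntegrable (μ := MeasureTheory.volume) 0 (π/2)
  have e : ∀ θ, sin θ ^ 2 / 2 * (1 / ((1 - t * sin θ ^ 2) * √(1 - t * sin θ ^ 2))) =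
      1 / (2 * t) * (1 / ((1 - t * sin θ ^ 2) * √(1 - t * sin θ ^ 2)) -
        1 / √(1 - t * sin θ ^ 2)) := fun θ => by
    have hp := radicand_pos h0 ht θ
    obtain ⟨p, hp'⟩ : ∃ p, p = 1 - t * sin θ ^ 2 := ⟨_, rfl⟩
    have hs2 : sin θ ^ 2 = (1 - p) / t := by rw [hp']; field_simp; ring
    rw [← hp'] at hp ⊢
    have hs := Real.sqrt_pos.2 hp
    rw [hs2]
    field_simp
  simp only [e]
  rw [intervalIntegral.integral_const_mul, intervalIntegral.integral_sub hcI hkI,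
    ← integral_cube h0 ht, Kel]
  field_simp

theorem hasDerivAt_Eel {t : ℝ} (h0 : 0 < t) (ht : t < 1) :
    HasDerivAt Eel ((Eel t - Kel t) / (2 * t)) t := by
  have hr : t < (1 + t) / 2 := by linarith
  have hδ : 0 < 1 - (1 + t) / 2 := by linarith
  have hk := legendre_integrand_continuous h0 ht
  have hE : Continuous (fun θ => √(1 - t * sin θ ^ 2)) := by fun_prop
  have := (intervalIntegral.hasDerivAt_integral_of_dominated_loc_of_deriv_le
    (μ := MeasureTheory.volume) (a := 0) (b := π/2)
    (F := fun t θ => √(1 - t * sin θ ^ 2))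
    (F' := fun t θ => -(sin θ ^ 2 / 2 * (1 / √(1 - t * sin θ ^ 2))))
    (bound := fun _ => 1 / 2 * (1 / √(1 - (1 + t) / 2)))
    (Ioo_mem_nhds h0 hr)
    (by
      refine Eventually.of_forall fun x => Continuous.aestronglyMeasurable ?_
      fun_prop)
    (hE.intervalIntegrable _ _)
    (by
      refine Continuous.aestronglyMeasurable ?_
      exact ((by fun_prop : Continuous fun θ : ℝ => sin θ ^ 2 / 2).mul hk).neg)
    (by
      refine Eventually.of_forall fun θ _ x hx => ?_
      have hx1 : x < 1 := by linarith [hx.2]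
      have hp := radicand_pos hx.1 hx1 θ
      have hs1 := sin_sq_le_one θ
      have hle : 1 - (1 + t) / 2 ≤ 1 - x * sin θ ^ 2 := by nlinarith [hx.1, hx.2]
      rw [norm_neg, Real.norm_of_nonneg (by positivity)]
      gcongr)
    intervalIntegrable_const
    (by
      refine Eventually.of_forall fun θ _ x hx => ?_
      have hx1 : x < 1 := by linarith [hx.2]
      have hp := radicand_pos hx.1 hx1 θ
      have hd : HasDerivAt (fun x => 1 - x * sin θ ^ 2) (-(sin θ ^ 2)) x := by
        convert! ((hasDerivAt_id x).mul_const (sin θ ^ 2)).const_sub 1 using 1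
        ring
      convert! hd.sqrt hp.ne' using 1
      field_simp)).2
  convert! this using 1
  have hkI := hk.intervalIntegrable (μ := MeasureTheory.volume) 0 (π/2)
  have e : ∀ θ, -(sin θ ^ 2 / 2 * (1 / √(1 - t * sin θ ^ 2))) =
      1 / (2 * t) * (√(1 - t * sin θ ^ 2) - 1 / √(1 - t * sin θ ^ 2)) := fun θ => by
    have hp := radicand_pos h0 ht θ
    have hs := Real.sqrt_pos.2 hp
    have e := Real.sq_sqrt hp.le
    obtain ⟨R, hR⟩ : ∃ R, R = √(1 - t * sin θ ^ 2) := ⟨_, rfl⟩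
    rw [← hR] at hs e ⊢
    have hs2 : sin θ ^ 2 = (1 - R ^ 2) / t := by rw [e]; field_simp; ring
    rw [hs2]
    field_simp
    ring
  simp only [e]
  rw [intervalIntegral.integral_const_mul,
    intervalIntegral.integral_sub (hE.intervalIntegrable _ _) hkI, Kel, Eel]
  field_simp

theorem continuous_Eel : Continuous Eel :=
  intervalIntegral.continuous_parametric_intervalIntegral_of_continuous' (by fun_prop) _ _

theorem Eel_one : Eel 1 = 1 := by
  have : Eel 1 = ∫ θ in (0:ℝ)..(π/2), cos θ := by
    refine intervalIntegral.integral_congr fun θ hθ => ?_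
    rw [Set.uIcc_of_le (by positivity)] at hθ
    have hc : 0 ≤ cos θ := cos_nonneg_of_mem_Icc ⟨by linarith [hθ.1, pi_pos], hθ.2⟩
    simp only [one_mul]
    rw [← cos_sq', Real.sqrt_sq hc]
  rw [this, integral_cos]
  simp

theorem Kel_sub_Eel_bounds {t : ℝ} (h0 : 0 < t) (ht : t < 1) :
    0 ≤ Kel t - Eel t ∧ Kel t - Eel t ≤ t * Kel t := by
  have hk := (legendre_integrand_continuous h0 ht).intervalIntegrable
    (μ := MeasureTheory.volume) 0 (π/2)
  have hE : IntervalIntegrable (fun θ => √(1 - t * sin θ ^ 2)) MeasureTheory.volume 0 (π/2) :=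
    Continuous.intervalIntegrable (by fun_prop) _ _
  have hpi : (0:ℝ) ≤ π / 2 := by positivity
  have key : ∀ θ, √(1 - t * sin θ ^ 2) = (1 - t * sin θ ^ 2) * (1 / √(1 - t * sin θ ^ 2)) :=
    fun θ => by rw [mul_one_div, Real.div_sqrt]
  constructor
  · rw [sub_nonneg]
    refine intervalIntegral.integral_mono_on hpi hE hk fun θ _ => ?_
    have hp := radicand_pos h0 ht θ
    refine (key θ).le.trans (mul_le_of_le_one_left (by positivity) ?_)
    nlinarith [sq_nonneg (sin θ)]
  · have : (1 - t) * Kel t ≤ Eel t := by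
      rw [Kel, ← intervalIntegral.integral_const_mul]
      refine intervalIntegral.integral_mono_on hpi (hk.const_mul _) hE fun θ _ => ?_
      have hp := radicand_pos h0 ht θ
      refine le_trans ?_ (key θ).ge
      gcongr
      nlinarith [sin_sq_le_one θ]
    linarith

/-- Legendre's relation: the left side has derivative zero on `(0, 1)` and tends to `π/2` as
`t → 0⁺`. -/
theorem legendre_relation {t : ℝ} (h0 : 0 < t) (ht : t < 1) :
    Eel t * Kel (1 - t) + Eel (1 - t) * Kel t - Kel t * Kel (1 - t) = π / 2 := by
  set G : ℝ → ℝ := fun t =>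
    Eel t * Kel (1 - t) + Eel (1 - t) * Kel t - Kel t * Kel (1 - t) with hG
  have hder : ∀ x ∈ Set.Ioo (0:ℝ) 1, HasDerivAt G 0 x := fun x ⟨hx0, hx1⟩ => by
    have a0 : 0 < 1 - x := by linarith
    have a1 : 1 - x < 1 := by linarith
    have hK := hasDerivAt_Kel hx0 hx1
    have hE := hasDerivAt_Eel hx0 hx1
    have hs : HasDerivAt (fun x : ℝ => 1 - x) (-1) x := (hasDerivAt_id x).const_sub 1
    have hK' : HasDerivAt (fun x => Kel (1 - x)) _ x := (hasDerivAt_Kel a0 a1).comp x hs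
    have hE' : HasDerivAt (fun x => Eel (1 - x)) _ x := (hasDerivAt_Eel a0 a1).comp x hs
    convert! ((hE.mul hK').add (hE'.mul hK)).sub (hK.mul hK') using 1
    simp only [sub_sub_cancel]
    field_simp
    ring
  have hconst : ∀ x ∈ Set.Ioo (0:ℝ) 1, G x = G t := fun x hx =>
    isOpen_Ioo.is_const_of_deriv_eq_zero isPreconnected_Ioo
      (fun x hx => (hder x hx).differentiableAt.differentiableWithinAt)
      (fun x hx => (hder x hx).deriv) hx ⟨h0, ht⟩
  have hI : Set.Ioo (0:ℝ) 1 ∈ nhdsWithin 0 (Set.Ioi (0:ℝ)) := Ioo_mem_nhdsGT one_pos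
  have hid : Tendsto (fun x : ℝ => x) (nhdsWithin 0 (Set.Ioi (0:ℝ))) (nhds 0) :=
    tendsto_nhdsWithin_of_tendsto_nhds tendsto_id
  have hup : Tendsto (fun x : ℝ => π / 2 / √(1 - x)) (nhdsWithin 0 (Set.Ioi (0:ℝ)))
      (nhds (π / 2)) := by
    have : ContinuousAt (fun x : ℝ => π / 2 / √(1 - x)) 0 :=
      ContinuousAt.div (by fun_prop) (by fun_prop) (by norm_num)
    simpa [Function.comp_def] using this.tendsto.comp hid
  have hKt : Tendsto Kel (nhdsWithin 0 (Set.Ioi (0:ℝ))) (nhds (π / 2)) := by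
    refine tendsto_of_tendsto_of_tendsto_of_le_of_le' tendsto_const_nhds hup ?_ ?_
    · filter_upwards [hI] with x hx using (Kel_bounds hx.1.le hx.2).1
    · filter_upwards [hI] with x hx using (Kel_bounds hx.1.le hx.2).2
  have hEt : Tendsto (fun x => Eel (1 - x)) (nhdsWithin 0 (Set.Ioi (0:ℝ))) (nhds 1) := by
    have : ContinuousAt (fun x => Eel (1 - x)) 0 :=
      (continuous_Eel.comp (by fun_prop : Continuous fun x : ℝ => 1 - x)).continuousAt
    have h := this.tendsto.comp hid
    simp only [sub_zero, Eel_one] at h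
    exact h
  -- `K(1-x) ≤ π/(2√x)`, which `K - E ≤ xK` beats
  have hprod : Tendsto (fun x => (Kel x - Eel x) * Kel (1 - x))
      (nhdsWithin 0 (Set.Ioi (0:ℝ))) (nhds 0) := by
    have hb : Tendsto (fun x => √x * (Kel x * (π / 2))) (nhdsWithin 0 (Set.Ioi (0:ℝ)))
        (nhds 0) := by
      have h1 : Tendsto (fun x => √x) (nhdsWithin 0 (Set.Ioi (0:ℝ))) (nhds 0) := by
        simpa [Function.comp_def] using (Real.continuous_sqrt.tendsto 0).comp hid
      simpa using h1.mul (hKt.mul_const (π / 2))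
    refine tendsto_of_tendsto_of_tendsto_of_le_of_le' tendsto_const_nhds hb ?_ ?_
    · filter_upwards [hI] with x hx
      have := (Kel_bounds (t := 1 - x) (by linarith [hx.2]) (by linarith [hx.1])).1
      exact mul_nonneg (Kel_sub_Eel_bounds hx.1 hx.2).1 (by linarith [pi_pos])
    · filter_upwards [hI] with x hx
      have k0 := (Kel_bounds hx.1.le hx.2).1
      have k1 := Kel_bounds (t := 1 - x) (by linarith [hx.2]) (by linarith [hx.1])
      rw [sub_sub_cancel] at k1
      have hs := Real.sqrt_pos.2 hx.1
      calc (Kel x - Eel x) * Kel (1 - x) ≤ (x * Kel x) * (π / 2 / √x) :=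
            mul_le_mul (Kel_sub_Eel_bounds hx.1 hx.2).2 k1.2 (by linarith [pi_pos])
              (mul_nonneg hx.1.le (by linarith [pi_pos]))
        _ = √x * (Kel x * (π / 2)) := by
            nth_rewrite 1 [← Real.mul_self_sqrt hx.1.le]
            field_simp
  have hlim : Tendsto G (nhdsWithin 0 (Set.Ioi (0:ℝ))) (nhds (π / 2)) := by
    have := (hEt.mul hKt).sub hprod
    rw [one_mul, sub_zero] at this
    refine this.congr fun x => ?_
    simp only [hG]
    ring
  have hlim' : Tendsto G (nhdsWithin 0 (Set.Ioi (0:ℝ))) (nhds (G t)) :=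
    tendsto_const_nhds.congr' (by filter_upwards [hI] with x hx using (hconst x hx).symm)
  exact tendsto_nhds_unique hlim' hlim

/-! ### Elliptic integrals at theta constants, and the modular lambda function -/

theorem nome4_le_nome3 {y : ℝ} (hy : 0 < y) : nome4 y ≤ nome3 y := by
  have h := jacobi_quartic hy
  have h2 := nome2_pos hy
  refine le_of_pow_le_pow_left₀ (n := 4) (by norm_num) (nome3_pos hy).le ?_
  have : 0 ≤ nome2 y ^ 4 := by positivity
  linarith

/-- By the duplication formulas, doubling `y` performs one arithmetic-geometric step on
`(θ₃², θ₄²)`. -/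
theorem gaussI_nome_double {y : ℝ} (hy : 0 < y) :
    gaussI (nome3 y ^ 2) (nome4 y ^ 2) = gaussI (nome3 (2 * y) ^ 2) (nome4 (2 * y) ^ 2) := by
  have h3 := nome3_pos hy
  have h4 := nome4_pos hy
  have h4' := nome4_pos (y := 2 * y) (by positivity)
  rw [gaussI_step (by positivity) (by positivity)]
  congr 1
  · rw [nome3_sq hy, nome4_sq hy]; ring
  · rw [← mul_pow, nome3_mul_nome4 hy, Real.sqrt_sq (by positivity)]

/-- Gauss's theorem `AGM(θ₃², θ₄²) = 1`: iterate the doubling of `y`, under which both theta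
constants tend to `1`. -/
theorem gaussI_nome {y : ℝ} (hy : 0 < y) : gaussI (nome3 y ^ 2) (nome4 y ^ 2) = π / 2 := by
  have hit : ∀ n : ℕ, gaussI (nome3 (2 ^ n * y) ^ 2) (nome4 (2 ^ n * y) ^ 2) =
      gaussI (nome3 y ^ 2) (nome4 y ^ 2) := fun n => by
    induction n with
    | zero => simp
    | succ n ih =>
      rw [← ih, gaussI_nome_double (y := 2 ^ n * y) (by positivity), pow_succ']
      ring_nf
  have hy' : Tendsto (fun n : ℕ => (2:ℝ) ^ n * y) atTop atTop :=
    (tendsto_pow_atTop_atTop_of_one_lt one_lt_two).atTop_mul_const hy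
  have l3 : Tendsto (fun n : ℕ => π / 2 / nome3 (2 ^ n * y) ^ 2) atTop (nhds (π / 2)) := by
    have := (tendsto_const_nhds (x := π / 2)).div
      (((tendsto_cosKernel_one ((0:ℝ) : UnitAddCircle)).comp hy').pow 2) (by norm_num)
    rw [one_pow, div_one] at this
    exact this
  have l4 : Tendsto (fun n : ℕ => π / 2 / nome4 (2 ^ n * y) ^ 2) atTop (nhds (π / 2)) := by
    have := (tendsto_const_nhds (x := π / 2)).div
      (((tendsto_cosKernel_one ((1/2:ℝ) : UnitAddCircle)).comp hy').pow 2) (by norm_num)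
    rw [one_pow, div_one] at this
    exact this
  have hb : ∀ n : ℕ, π / 2 / nome3 (2 ^ n * y) ^ 2 ≤ gaussI (nome3 y ^ 2) (nome4 y ^ 2) ∧
      gaussI (nome3 y ^ 2) (nome4 y ^ 2) ≤ π / 2 / nome4 (2 ^ n * y) ^ 2 := fun n => by
    have hp : 0 < 2 ^ n * y := by positivity
    have h4 := nome4_pos hp
    have h34 := nome4_le_nome3 hp
    rw [← hit n]
    exact gaussI_bounds (by positivity) (by gcongr)
  exact le_antisymm (ge_of_tendsto' l4 fun n => (hb n).2) (le_of_tendsto' l3 fun n => (hb n).1)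

/-- The modular lambda function on the imaginary axis, `λ(iy) = 1 - θ₄⁴/θ₃⁴`. -/
def lam (y : ℝ) : ℝ := 1 - nome4 y ^ 4 / nome3 y ^ 4

theorem lam_eq {y : ℝ} (hy : 0 < y) : lam y = nome2 y ^ 4 / nome3 y ^ 4 := by
  have h3 := nome3_pos hy
  rw [lam, eq_div_iff (by positivity), sub_mul, div_mul_cancel₀ _ (by positivity),
    jacobi_quartic hy]
  ring

theorem lam_mem {y : ℝ} (hy : 0 < y) : 0 < lam y ∧ lam y < 1 := by
  have h3 := nome3_pos hy
  have h2 := nome2_pos hy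
  have h4 := nome4_pos hy
  constructor
  · rw [lam_eq hy]; positivity
  · have : 0 < nome4 y ^ 4 / nome3 y ^ 4 := by positivity
    rw [lam]; linarith

theorem lam_inv {y : ℝ} (hy : 0 < y) : lam (1 / y) = 1 - lam y := by
  have h3 := nome3_pos hy
  have e3 : nome3 (1 / y) ^ 4 = (nome3 (1 / y) ^ 2) ^ 2 := by ring
  have e : √y ^ 4 = y ^ 2 := by
    rw [show √y ^ 4 = (√y ^ 2) ^ 2 by ring, Real.sq_sqrt hy.le]
  rw [lam_eq hy, lam, e3, nome3_inv hy, nome4_inv hy, mul_pow, e]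
  field_simp

theorem Kel_lam {y : ℝ} (hy : 0 < y) : Kel (lam y) = π / 2 * nome3 y ^ 2 := by
  have h3 := nome3_pos hy
  have := Kel_eq_gaussI (a := nome3 y ^ 2) (b := nome4 y ^ 2) (by positivity)
  rw [gaussI_nome hy, ← pow_mul, ← pow_mul] at this
  rw [lam, this]
  ring

theorem Kel_one_sub_lam {y : ℝ} (hy : 0 < y) : Kel (1 - lam y) = y * Kel (lam y) := by
  rw [← lam_inv hy, Kel_lam (by positivity), nome3_inv hy, Kel_lam hy]
  ring

theorem continuousOn_lam : ContinuousOn lam (Set.Ioi 0) := by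
  refine ContinuousOn.sub continuousOn_const (ContinuousOn.div ?_ ?_ ?_)
  · exact (HurwitzZeta.continuousOn_cosKernel _).pow 4
  · exact (HurwitzZeta.continuousOn_cosKernel _).pow 4
  · exact fun y hy => (pow_pos (nome3_pos hy) 4).ne'

theorem tendsto_lam : Tendsto lam atTop (nhds 0) := by
  have := (tendsto_const_nhds (x := (1:ℝ))).sub
    (((tendsto_cosKernel_one ((1/2:ℝ) : UnitAddCircle)).pow 4).div
      ((tendsto_cosKernel_one ((0:ℝ) : UnitAddCircle)).pow 4) (by norm_num))
  rw [one_pow, div_one, sub_self] at this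
  exact this

/-- `λ` is continuous, tends to `0` at infinity, and satisfies `λ(1/y) = 1 - λ(y)`. -/
theorem exists_lam_eq {t : ℝ} (h0 : 0 < t) (h1 : t < 1) : ∃ y, 0 < y ∧ lam y = t := by
  obtain ⟨a, ha, hat⟩ := ((eventually_gt_atTop 0).and (tendsto_lam.eventually_lt_const h0)).exists
  obtain ⟨b, hb, hbt⟩ := ((eventually_gt_atTop 0).and
    (tendsto_lam.eventually_lt_const (sub_pos.2 h1))).exists
  have hb' : 0 < 1 / b := by positivity
  have hbi : t < lam (1 / b) := by rw [lam_inv hb]; linarith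
  obtain ⟨y, hy, hyt⟩ := isPreconnected_Ioi.intermediate_value (Set.mem_Ioi.2 ha)
    (Set.mem_Ioi.2 hb') continuousOn_lam ⟨hat.le, hbi.le⟩
  exact ⟨y, hy, hyt⟩

/-! ### Derivatives in `y` of the theta constants -/

/-- The sum `∑_{m ≥ 1} ε(m - 1) m^{2k} e^{-πm²y}`; the summation index is `n = m - 1`, so that `ε`
is indexed from `0`. -/
def heatSum (ε : ℕ → ℝ) (k : ℕ) (y : ℝ) : ℝ :=
  ∑' n : ℕ, ε n * ((n:ℝ) + 1) ^ (2 * k) * rexp (-π * ((n:ℝ) + 1) ^ 2 * y)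

theorem summable_heat (k : ℕ) {y : ℝ} (hy : 0 < y) :
    Summable fun n : ℕ => ((n:ℝ) + 1) ^ k * rexp (-π * ((n:ℝ) + 1) ^ 2 * y) := by
  have h := (summable_nat_add_iff 1).2
    (Real.summable_pow_mul_exp_neg_nat_mul k (mul_pos pi_pos hy))
  refine Summable.of_nonneg_of_le (fun n => by positivity) (fun n => ?_) h
  push_cast
  refine mul_le_mul_of_nonneg_left (exp_le_exp.2 ?_) (by positivity)
  have : (1:ℝ) ≤ (n:ℝ) + 1 := by linarith [Nat.cast_nonneg (α := ℝ) n]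
  nlinarith [mul_nonneg (mul_pos pi_pos hy).le (mul_nonneg (zero_le_one.trans this)
    (sub_nonneg.2 this))]

theorem summable_heat_mul {ε : ℕ → ℝ} (hε : ∀ n, |ε n| ≤ 1) (k : ℕ) {y : ℝ} (hy : 0 < y) :
    Summable fun n : ℕ => ε n * ((n:ℝ) + 1) ^ (2 * k) * rexp (-π * ((n:ℝ) + 1) ^ 2 * y) := by
  refine Summable.of_norm_bounded (summable_heat (2 * k) hy) fun n => ?_
  rw [mul_assoc, norm_mul, Real.norm_of_nonneg (by positivity :
    0 ≤ ((n:ℝ) + 1) ^ (2 * k) * rexp (-π * ((n:ℝ) + 1) ^ 2 * y))]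
  exact mul_le_of_le_one_left (by positivity) (hε n)

theorem hasDerivAt_heatSum {ε : ℕ → ℝ} (hε : ∀ n, |ε n| ≤ 1) (k : ℕ) {y : ℝ} (hy : 0 < y) :
    HasDerivAt (heatSum ε k) (-π * heatSum ε (k + 1) y) y := by
  have hy2 : 0 < y / 2 := by positivity
  have h := hasDerivAt_tsum_of_isPreconnected
    (g := fun (n : ℕ) (y : ℝ) => ε n * ((n:ℝ) + 1) ^ (2 * k) * rexp (-π * ((n:ℝ) + 1) ^ 2 * y))
    (g' := fun (n : ℕ) (y : ℝ) =>
      -π * (ε n * ((n:ℝ) + 1) ^ (2 * (k + 1)) * rexp (-π * ((n:ℝ) + 1) ^ 2 * y)))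
    ((summable_heat (2 * (k + 1)) hy2).mul_left π) (isOpen_Ioi (a := y / 2)) isPreconnected_Ioi
    (fun n z _ => by
      convert! (((hasDerivAt_id z).const_mul (-π * ((n:ℝ) + 1) ^ 2)).exp).const_mul
        (ε n * ((n:ℝ) + 1) ^ (2 * k)) using 1
      simp only [id]
      ring)
    (fun n z hz => by
      have hz' : y / 2 < z := hz
      rw [mul_assoc (ε n), norm_mul, norm_mul, norm_neg, Real.norm_of_nonneg pi_pos.le,
        Real.norm_of_nonneg (by positivity :
          0 ≤ ((n:ℝ) + 1) ^ (2 * (k + 1)) * rexp (-π * ((n:ℝ) + 1) ^ 2 * z))]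
      refine mul_le_mul_of_nonneg_left ?_ pi_pos.le
      refine (mul_le_of_le_one_left (by positivity) (hε n)).trans ?_
      gcongr ?_ * rexp ?_
      have : 0 ≤ π * ((n:ℝ) + 1) ^ 2 := by positivity
      nlinarith)
    (Set.mem_Ioi.2 (half_lt_self hy)) (summable_heat_mul hε k hy) (Set.mem_Ioi.2 (half_lt_self hy))
  rw [tsum_mul_left] at h
  exact h

/-- The sign `(-1)^m` of the `m`-th term of `θ₄`, at `m = n + 1`. -/
def alt (n : ℕ) : ℝ := (-1) ^ (n + 1)

theorem abs_alt (n : ℕ) : |alt n| ≤ 1 := by simp [alt]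

theorem nome3_eq {y : ℝ} (hy : 0 < y) : nome3 y = 1 + 2 * heatSum (fun _ => 1) 0 y := by
  have := (hasSum_nome3_nat hy).tsum_eq
  rw [tsum_mul_left] at this
  simp only [heatSum, mul_zero, pow_zero, mul_one, one_mul]
  linarith

theorem nome4_eq {y : ℝ} (hy : 0 < y) : nome4 y = 1 + 2 * heatSum alt 0 y := by
  have := (hasSum_nome4_nat hy).tsum_eq
  simp only [mul_assoc] at this
  rw [tsum_mul_left] at this
  simp only [heatSum, mul_zero, pow_zero, mul_one, alt, mul_assoc] at this ⊢
  linarith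

theorem hasDerivAt_nome3 {y : ℝ} (hy : 0 < y) :
    HasDerivAt nome3 (2 * (-π * heatSum (fun _ => 1) 1 y)) y := by
  refine (((hasDerivAt_heatSum (ε := fun _ => 1) (by simp) 0 hy).const_mul 2).const_add
    1).congr_of_eventuallyEq ?_
  filter_upwards [Ioi_mem_nhds hy] with z hz using nome3_eq hz

theorem hasDerivAt_nome4 {y : ℝ} (hy : 0 < y) :
    HasDerivAt nome4 (2 * (-π * heatSum alt 1 y)) y := by
  refine (((hasDerivAt_heatSum abs_alt 0 hy).const_mul 2).const_add
    1).congr_of_eventuallyEq ?_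
  filter_upwards [Ioi_mem_nhds hy] with z hz using nome4_eq hz

/-- Obtained by differentiating `K(1-λ) = y K(λ)`: the Legendre relation collapses the terms in
`E(1-λ)` and `K(1-λ)`. -/
theorem hasDerivAt_lam {y : ℝ} (hy : 0 < y) :
    HasDerivAt lam (-(4 / π) * lam y * (1 - lam y) * Kel (lam y) ^ 2) y := by
  have h3 := nome3_pos hy
  obtain ⟨h0, h1⟩ := lam_mem hy
  have h1' : 0 < 1 - lam y := by linarith
  -- only differentiability of `λ` is taken from the theta series; its value comes from `heq` below
  obtain ⟨d, hd⟩ : ∃ d, HasDerivAt lam d y :=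
    ⟨_, (((hasDerivAt_nome4 hy).pow 4).div ((hasDerivAt_nome3 hy).pow 4)
      (pow_pos h3 4).ne').const_sub 1⟩
  convert! hd using 1
  have hK := (hasDerivAt_Kel h0 h1).comp y hd
  have hK' := (hasDerivAt_Kel h1' (by linarith)).comp y (hd.const_sub 1)
  have hm := (hasDerivAt_id y).mul hK
  have heq : (Kel ∘ fun z => 1 - lam z) =ᶠ[nhds y] (id * (Kel ∘ lam)) := by
    filter_upwards [Ioi_mem_nhds hy] with z hz using Kel_one_sub_lam hz
  have hu := hK'.unique (hm.congr_of_eventuallyEq heq)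
  have hL := legendre_relation h0 h1
  have hY := Kel_one_sub_lam hy
  simp only [sub_sub_cancel, hY, id, Function.comp] at hu hL
  have ht : lam y ≠ 0 := h0.ne'
  have ht' : 1 - lam y ≠ 0 := h1'.ne'
  set t := lam y
  set K := Kel t
  set E := Eel t
  set E' := Eel (1 - t)
  field_simp at hu
  have hpi : π ≠ 0 := pi_ne_zero
  -- `hu` is linear in the unknown `d = λ'(y)`; Legendre's relation evaluates its coefficient as `π/2`.
  have hfin : d * (π / 2) = -2 * t * (1 - t) * K ^ 2 := by
    rw [← hL]
    linear_combination (-K) * hu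
  field_simp
  linear_combination (-2) * hfin

theorem hasDerivAt_Kel_lam {y : ℝ} (hy : 0 < y) :
    HasDerivAt (fun y => Kel (lam y))
      (-(2 / π) * Kel (lam y) ^ 2 * (Eel (lam y) - (1 - lam y) * Kel (lam y))) y := by
  obtain ⟨h0, h1⟩ := lam_mem hy
  have h1' : 1 - lam y ≠ 0 := by linarith
  convert! (hasDerivAt_Kel h0 h1).comp y (hasDerivAt_lam hy) using 1
  field_simp
  ring

theorem hasDerivAt_Eel_lam {y : ℝ} (hy : 0 < y) :
    HasDerivAt (fun y => Eel (lam y))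
      (-(2 / π) * (1 - lam y) * Kel (lam y) ^ 2 * (Eel (lam y) - Kel (lam y))) y := by
  obtain ⟨h0, h1⟩ := lam_mem hy
  convert! (hasDerivAt_Eel h0 h1).comp y (hasDerivAt_lam hy) using 1
  field_simp
  ring

theorem nome4_pow_four {y : ℝ} (hy : 0 < y) :
    nome4 y ^ 4 = (1 - lam y) * (4 / π ^ 2 * Kel (lam y) ^ 2) := by
  have h3 := nome3_pos hy
  rw [Kel_lam hy, lam]
  field_simp
  ring

/-- First derivative of `θ₄`, from the logarithmic derivative of `θ₄⁴ = (1-λ)(2K/π)²`. -/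
theorem nome4_first {y : ℝ} (hy : 0 < y) :
    2 * (-π * heatSum alt 1 y) =
      nome4 y * (Kel (lam y) * (Kel (lam y) - Eel (lam y)) / π) := by
  have h4 := nome4_pos hy
  have hl := (hasDerivAt_nome4 hy).pow 4
  have hr := ((hasDerivAt_lam hy).const_sub 1).mul
    (((hasDerivAt_Kel_lam hy).pow 2).const_mul (4 / π ^ 2))
  have hu := hl.unique (hr.congr_of_eventuallyEq (by
    filter_upwards [Ioi_mem_nhds hy] with z hz using nome4_pow_four hz))
  have hq := nome4_pow_four hy
  simp only [Pi.pow_apply] at hu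
  obtain ⟨D, hD⟩ : ∃ D, D = 2 * (-π * heatSum alt 1 y) := ⟨_, rfl⟩
  rw [← hD] at hu ⊢
  set N := nome4 y
  have hpi : π ≠ 0 := pi_ne_zero
  have h : 4 * N ^ 3 * D = N ^ 4 * (4 / π * Kel (lam y) * (Kel (lam y) - Eel (lam y))) := by
    norm_num at hu
    rw [hu, hq]
    field_simp
    ring
  refine mul_left_cancel₀ (by positivity : 4 * N ^ 3 ≠ 0) ?_
  rw [h]
  ring

/-- Second derivative of `θ₄`, from differentiating `nome4_first` once more. -/
theorem nome4_second {y : ℝ} (hy : 0 < y) :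
    2 * π ^ 2 * heatSum alt 2 y = nome4 y * (Kel (lam y) ^ 2 / π ^ 2 *
      (3 * Eel (lam y) ^ 2 - 6 * Kel (lam y) * Eel (lam y) +
        (3 - 2 * lam y) * Kel (lam y) ^ 2)) := by
  have hl := ((hasDerivAt_heatSum abs_alt 1 hy).const_mul (-π)).const_mul 2
  have hK := hasDerivAt_Kel_lam hy
  have hE := hasDerivAt_Eel_lam hy
  have hr := (hasDerivAt_nome4 hy).mul ((hK.mul (hK.sub hE)).div_const π)
  have hu := hl.unique (hr.congr_of_eventuallyEq (by
    filter_upwards [Ioi_mem_nhds hy] with z hz using nome4_first hz))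
  rw [nome4_first hy] at hu
  have : 2 * π ^ 2 * heatSum alt 2 y = 2 * (-π * (-π * heatSum alt (1 + 1) y)) := by ring
  rw [this, hu]
  simp only [Pi.mul_apply, Pi.sub_apply]
  field_simp
  ring

/-! ### The expansion in `x` -/

theorem tauP_lam {y : ℝ} (hy : 0 < y) : tauP (lam y) = Complex.I * y := by
  have h3 := nome3_pos hy
  have hK : (Kel (lam y) : ℂ) ≠ 0 := by
    rw [Kel_lam hy]
    exact_mod_cast (by positivity : π / 2 * nome3 y ^ 2 ≠ 0)
  rw [tauP, Kel_one_sub_lam hy]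
  push_cast
  field_simp

/-- On the imaginary axis and for real `x` the series defining `θ₄` is real. -/
theorem theta4_imag {y : ℝ} (x : ℝ) :
    theta4 x (Complex.I * y) = ((1 + 2 * ∑' n : ℕ, alt n * rexp (-π * ((n:ℝ) + 1) ^ 2 * y) *
      cos (2 * ((n:ℝ) + 1) * x) : ℝ) : ℂ) := by
  rw [theta4]
  push_cast
  congr 3
  funext n
  simp only [alt]
  push_cast
  congr 3
  ring_nf
  rw [Complex.I_sq]
  ring_nf

theorem abs_cos_sub_le (z : ℝ) : |cos z - (1 - z ^ 2 / 2 + z ^ 4 / 24)| ≤ 3 * z ^ 6 := by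
  have h6 : |z| ^ 6 = z ^ 6 := Even.pow_abs (by decide) z
  rcases le_total |z| 1 with h | h
  · have hz : ‖(z : ℂ) * Complex.I‖ ≤ 1 := by simpa using h
    have hb := Complex.exp_bound hz (n := 6) (by norm_num)
    have hre := (Complex.abs_re_le_norm _).trans hb
    have he : (Complex.exp (z * Complex.I) -
        ∑ m ∈ Finset.range 6, ((z : ℂ) * Complex.I) ^ m / (m.factorial : ℂ)).re =
        cos z - (1 - z ^ 2 / 2 + z ^ 4 / 24) := by
      have : ∑ m ∈ Finset.range 6, ((z : ℂ) * Complex.I) ^ m / (m.factorial : ℂ) =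
          ((1 - z ^ 2 / 2 + z ^ 4 / 24 : ℝ) : ℂ) +
            ((z - z ^ 3 / 6 + z ^ 5 / 120 : ℝ) : ℂ) * Complex.I := by
        simp only [Finset.sum_range_succ, Finset.sum_range_zero, Nat.factorial, mul_pow,
          Complex.I_sq, Complex.I_pow_three, Complex.I_pow_four,
          show Complex.I ^ 5 = Complex.I by rw [pow_succ, Complex.I_pow_four, one_mul]]
        push_cast
        ring
      rw [this, Complex.sub_re, Complex.exp_ofReal_mul_I_re, Complex.add_re,
        Complex.re_ofReal_mul, Complex.I_re, Complex.ofReal_re]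
      ring
    rw [he] at hre
    refine hre.trans ?_
    have hn : ‖(z : ℂ) * Complex.I‖ ^ 6 = z ^ 6 := by simpa using h6
    rw [hn, mul_comm]
    gcongr
    norm_num [Nat.factorial]
  · have h2 : 1 ≤ z ^ 2 := by rw [← sq_abs]; nlinarith
    have hc := abs_le.1 (abs_cos_le_one z)
    have h4 : z ^ 2 ≤ z ^ 4 := by nlinarith
    have h6 : z ^ 4 ≤ z ^ 6 := by nlinarith [sq_nonneg (z ^ 2)]
    rw [abs_le]
    constructor <;> nlinarith [hc.1, hc.2]

/-- Taylor expansion of `θ₄(x|iy)` in `x` to order four, with the remainder bound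
`3 (2m x)⁶ = 192 m⁶ x⁶` on each cosine `cos 2mx`. -/
theorem theta4_taylor {y : ℝ} (hy : 0 < y) (x : ℝ) :
    |(1 + 2 * ∑' n : ℕ, alt n * rexp (-π * ((n:ℝ) + 1) ^ 2 * y) * cos (2 * ((n:ℝ) + 1) * x)) -
      (nome4 y - 4 * heatSum alt 1 y * x ^ 2 + 4 / 3 * heatSum alt 2 y * x ^ 4)| ≤
    (384 * heatSum (fun _ => 1) 3 y) * x ^ 6 := by
  have s0 := (summable_heat_mul abs_alt 0 hy)
  have s1 := (summable_heat_mul abs_alt 1 hy)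
  have s2 := (summable_heat_mul abs_alt 2 hy)
  have s3 := (summable_heat_mul (ε := fun _ => 1) (by simp) 3 hy)
  have sc : Summable fun n : ℕ =>
      alt n * rexp (-π * ((n:ℝ) + 1) ^ 2 * y) * cos (2 * ((n:ℝ) + 1) * x) := by
    refine Summable.of_norm_bounded (summable_heat 0 hy) fun n => ?_
    rw [pow_zero, one_mul, mul_right_comm, norm_mul, norm_mul, Real.norm_of_nonneg (exp_pos _).le]
    refine mul_le_of_le_one_left (exp_pos _).le ?_
    exact mul_le_one₀ (abs_alt n) (norm_nonneg _) (abs_cos_le_one _)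
  have hsum := ((sc.hasSum.sub s0.hasSum).add ((s1.hasSum.mul_left (2 * x ^ 2)))).sub
    (s2.hasSum.mul_left (2 / 3 * x ^ 4))
  have e : (1 + 2 * ∑' n : ℕ, alt n * rexp (-π * ((n:ℝ) + 1) ^ 2 * y) *
        cos (2 * ((n:ℝ) + 1) * x)) -
      (nome4 y - 4 * heatSum alt 1 y * x ^ 2 + 4 / 3 * heatSum alt 2 y * x ^ 4) =
      2 * ((∑' n : ℕ, alt n * rexp (-π * ((n:ℝ) + 1) ^ 2 * y) *
        cos (2 * ((n:ℝ) + 1) * x)) - heatSum alt 0 y + 2 * x ^ 2 * heatSum alt 1 y -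
          2 / 3 * x ^ 4 * heatSum alt 2 y) := by
    rw [nome4_eq hy]; ring
  have hb : HasSum (fun n : ℕ => 192 * x ^ 6 *
      (1 * ((n:ℝ) + 1) ^ (2 * 3) * rexp (-π * ((n:ℝ) + 1) ^ 2 * y)))
      (192 * x ^ 6 * heatSum (fun _ => 1) 3 y) := s3.hasSum.mul_left _
  have hle := tsum_of_norm_bounded (f := fun n : ℕ =>
      alt n * rexp (-π * ((n:ℝ) + 1) ^ 2 * y) * cos (2 * ((n:ℝ) + 1) * x) -
      alt n * ((n:ℝ) + 1) ^ (2 * 0) * rexp (-π * ((n:ℝ) + 1) ^ 2 * y) +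
      2 * x ^ 2 * (alt n * ((n:ℝ) + 1) ^ (2 * 1) * rexp (-π * ((n:ℝ) + 1) ^ 2 * y)) -
      2 / 3 * x ^ 4 * (alt n * ((n:ℝ) + 1) ^ (2 * 2) * rexp (-π * ((n:ℝ) + 1) ^ 2 * y)))
      hb (fun n => by
    have : alt n * rexp (-π * ((n:ℝ) + 1) ^ 2 * y) * cos (2 * ((n:ℝ) + 1) * x) -
      alt n * ((n:ℝ) + 1) ^ (2 * 0) * rexp (-π * ((n:ℝ) + 1) ^ 2 * y) +
      2 * x ^ 2 * (alt n * ((n:ℝ) + 1) ^ (2 * 1) * rexp (-π * ((n:ℝ) + 1) ^ 2 * y)) -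
      2 / 3 * x ^ 4 * (alt n * ((n:ℝ) + 1) ^ (2 * 2) * rexp (-π * ((n:ℝ) + 1) ^ 2 * y)) =
      alt n * (rexp (-π * ((n:ℝ) + 1) ^ 2 * y) * (cos (2 * ((n:ℝ) + 1) * x) -
        (1 - (2 * ((n:ℝ) + 1) * x) ^ 2 / 2 + (2 * ((n:ℝ) + 1) * x) ^ 4 / 24))) := by ring
    rw [this, norm_mul, norm_mul, Real.norm_of_nonneg (exp_pos _).le]
    refine (mul_le_of_le_one_left (by positivity) (abs_alt n)).trans ?_
    refine (mul_le_mul_of_nonneg_left (abs_cos_sub_le _) (exp_pos _).le).trans (le_of_eq ?_)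
    ring)
  rw [hsum.tsum_eq] at hle
  rw [e, abs_mul, abs_two]
  have h' : |(∑' n : ℕ, alt n * rexp (-π * ((n:ℝ) + 1) ^ 2 * y) *
        cos (2 * ((n:ℝ) + 1) * x)) - heatSum alt 0 y + 2 * x ^ 2 * heatSum alt 1 y -
          2 / 3 * x ^ 4 * heatSum alt 2 y| ≤ 192 * x ^ 6 * heatSum (fun _ => 1) 3 y := hle
  linarith

open Asymptotics in
theorem isBigO_exp_quartic (a b c : ℝ) :
    (fun x : ℝ => rexp (-(a * x ^ 2)) * (1 + b * x ^ 2 + c * x ^ 4) -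
      (1 + (b - a) * x ^ 2 + (c - a * b + a ^ 2 / 2) * x ^ 4)) =O[nhds 0] fun x => x ^ 6 := by
  have h0 : Tendsto (fun x : ℝ => -(a * x ^ 2)) (nhds 0) (nhds 0) := by
    have : Continuous fun x : ℝ => -(a * x ^ 2) := by fun_prop
    simpa using this.tendsto 0
  have h1 := (Real.exp_sub_sum_range_isBigO_pow 3).comp_tendsto h0
  have h2 : (fun x : ℝ => rexp (-(a * x ^ 2)) - (1 - a * x ^ 2 + a ^ 2 * x ^ 4 / 2))
      =O[nhds 0] fun x => x ^ 6 := by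
    refine (h1.congr_left fun x => ?_).trans (IsBigO.of_bound (|a| ^ 3) (Eventually.of_forall
      fun x => le_of_eq ?_))
    · simp only [Function.comp, Finset.sum_range_succ, Finset.sum_range_zero, Nat.factorial]
      push_cast
      ring
    · simp only [Function.comp, norm_pow, norm_neg, norm_mul, Real.norm_eq_abs]
      ring
  have hB : (fun x : ℝ => 1 + b * x ^ 2 + c * x ^ 4) =O[nhds 0] fun _ => (1:ℝ) :=
    (by fun_prop : Continuous fun x : ℝ => 1 + b * x ^ 2 + c * x ^ 4).continuousAt.norm.isBoundedUnder_le.isBigO_one ℝ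
  have hP : (fun x : ℝ => a ^ 2 * b / 2 - a * c + a ^ 2 * c / 2 * x ^ 2) =O[nhds 0]
      fun _ => (1:ℝ) :=
    (by fun_prop : Continuous fun x : ℝ => a ^ 2 * b / 2 - a * c +
      a ^ 2 * c / 2 * x ^ 2).continuousAt.norm.isBoundedUnder_le.isBigO_one ℝ
  have h3 := (h2.mul hB).add ((isBigO_refl (fun x : ℝ => x ^ 6) (nhds 0)).mul hP)
  simp only [mul_one] at h3
  refine h3.congr_left fun x => ?_
  ring

open Asymptotics in
theorem theta4_expansion (t : ℝ) (ht : t ∈ Set.Ioo (0:ℝ) 1) :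
    (fun x : ℝ => theta4 (x : ℂ) (tauP t) -
        theta4 0 (tauP t) *
          Complex.exp (-(2 * (x : ℂ) ^ 2 / (π : ℂ) ^ 2) * (Eel t : ℂ) * (Kel t : ℂ)) *
          (1 + 2 * (x : ℂ) ^ 2 * (Kel t : ℂ) ^ 2 / (π : ℂ) ^ 2 +
            (2 * (3 - 2 * (t : ℂ)) / 3) * (x : ℂ) ^ 4 * (Kel t : ℂ) ^ 4 / (π : ℂ) ^ 4))
      =O[nhds (0:ℝ)] fun x : ℝ => x ^ 6 := by
  obtain ⟨y, hy, rfl⟩ := exists_lam_eq ht.1 ht.2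
  rw [tauP_lam hy]
  have hf := nome4_first hy
  have hs := nome4_second hy
  have hpi : π ≠ 0 := pi_ne_zero
  set K := Kel (lam y)
  set E := Eel (lam y)
  set t := lam y
  have h0 : theta4 0 (Complex.I * y) = (nome4 y : ℂ) := by
    have := theta4_imag (y := y) 0
    rw [Complex.ofReal_zero] at this
    rw [this, nome4_eq hy]
    simp [heatSum]
  -- `c1` and `c2` match the coefficients of `x²` and `x⁴` with those in `isBigO_exp_quartic`
  have c1 : -4 * heatSum alt 1 y = nome4 y * (2 * K ^ 2 / π ^ 2 - 2 * E * K / π ^ 2) := by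
    have : heatSum alt 1 y = -(nome4 y * (K * (K - E) / π)) / (2 * π) := by
      rw [← hf]; field_simp
    rw [this]
    field_simp
    ring
  have c2 : 4 / 3 * heatSum alt 2 y = nome4 y * (2 * (3 - 2 * t) / 3 * K ^ 4 / π ^ 4 -
      2 * E * K / π ^ 2 * (2 * K ^ 2 / π ^ 2) + (2 * E * K / π ^ 2) ^ 2 / 2) := by
    have : heatSum alt 2 y = (2 * π ^ 2 * heatSum alt 2 y) / (2 * π ^ 2) := by field_simp
    rw [this, hs]
    field_simp
    ring
  have hA : (fun x : ℝ => (1 + 2 * ∑' n : ℕ, alt n * rexp (-π * ((n:ℝ) + 1) ^ 2 * y) *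
      cos (2 * ((n:ℝ) + 1) * x)) -
      (nome4 y - 4 * heatSum alt 1 y * x ^ 2 + 4 / 3 * heatSum alt 2 y * x ^ 4))
      =O[nhds 0] fun x => x ^ 6 :=
    IsBigO.of_bound (384 * heatSum (fun _ => 1) 3 y) (Eventually.of_forall fun x => by
      rw [Real.norm_eq_abs, Real.norm_of_nonneg (by positivity)]
      exact theta4_taylor hy x)
  have hB := (isBigO_exp_quartic (2 * E * K / π ^ 2) (2 * K ^ 2 / π ^ 2)
    (2 * (3 - 2 * t) / 3 * K ^ 4 / π ^ 4)).const_mul_left (nome4 y)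
  refine IsBigO.of_norm_left (((hA.sub hB).norm_left).congr_left fun x => ?_)
  rw [← Complex.norm_real, h0, theta4_imag]
  congr 1
  have hx : (1 + 2 * ∑' n : ℕ, alt n * rexp (-π * ((n:ℝ) + 1) ^ 2 * y) *
      cos (2 * ((n:ℝ) + 1) * x)) -
      (nome4 y - 4 * heatSum alt 1 y * x ^ 2 + 4 / 3 * heatSum alt 2 y * x ^ 4) -
      nome4 y * (rexp (-(2 * E * K / π ^ 2 * x ^ 2)) * (1 + 2 * K ^ 2 / π ^ 2 * x ^ 2 +
        2 * (3 - 2 * t) / 3 * K ^ 4 / π ^ 4 * x ^ 4) -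
      (1 + (2 * K ^ 2 / π ^ 2 - 2 * E * K / π ^ 2) * x ^ 2 + (2 * (3 - 2 * t) / 3 * K ^ 4 / π ^ 4 -
      2 * E * K / π ^ 2 * (2 * K ^ 2 / π ^ 2) + (2 * E * K / π ^ 2) ^ 2 / 2) * x ^ 4)) =
      (1 + 2 * ∑' n : ℕ, alt n * rexp (-π * ((n:ℝ) + 1) ^ 2 * y) *
      cos (2 * ((n:ℝ) + 1) * x)) - nome4 y * rexp (-(2 * x ^ 2 / π ^ 2) * E * K) *
        (1 + 2 * x ^ 2 * K ^ 2 / π ^ 2 + (2 * (3 - 2 * t) / 3) * x ^ 4 * K ^ 4 / π ^ 4) := by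
    rw [show -(2 * x ^ 2 / π ^ 2) * E * K = -(2 * E * K / π ^ 2 * x ^ 2) by ring]
    linear_combination (-x ^ 2) * c1 - x ^ 4 * c2
  rw [hx]
  push_cast
  rfl

end
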